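/- Fix p, q ∈ (0,1) and an integer n ≥ 1. In the *-algebra O(S³_{pq}), with B := 1 − b b*, the identity Σ_{k=0}^{n} binom(n,k)_p · p^{n−k} · B^{n−k} a^{n−k} b^{*k} b^{k} a^{*(n−k)} = 1 holds. Consequently, setting (X_n)_k := b^k a^{*(n−k)} and (Y_n)_k := binom(n,k)_p p^{n−k} B^{n−k} a^{n−k} b^{*k} for k = 0,…,n, one has Y_n^T X_n = 1, and the (n+1)×(n+1) matrix E_n := X_n Y_n^T over O(S³_{pq}) is an idempotent: E_n² = E_n. -/

import Mathlib

/-!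
Since `a`, `a*` commute with `b`, `b*` and `a a* B = B`, the factor `B^m a^m a*^m` collapses to
`B^m` (`pow_collapse`), so the claim reduces to
`∑ binom(n,k)_p p^{n-k} B^{n-k} b*^k b^k = 1`.
The relations `b* b = 1 - p B` and `b* B = p B b*` give
`b*^{k+1} b^{k+1} = b*^k b^k - p^{k+1} B b*^k b^k` (`star_pow_mul_pow_succ`). With the
`p`-Pascal rule `binom(n+1,k+1) = binom(n,k) + p^{k+1} binom(n,k+1)`, the sum for `n + 1`
collapses to the sum for `n` (`gauss_sum`), which settles the identity by induction.
Idempotency follows from `X (Yᵀ X) Yᵀ = X Yᵀ`.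
-/

/-- The `x`-binomial coefficient `binom(n,k)_x`. -/
noncomputable def qBinom (x : ℝ) (n k : ℕ) : ℝ :=
  (∏ i ∈ Finset.range n, (1 - x ^ (i + 1))) /
    ((∏ i ∈ Finset.range k, (1 - x ^ (i + 1))) *
      (∏ i ∈ Finset.range (n - k), (1 - x ^ (i + 1))))

/-- The Gaussian binomial coefficient, defined by the Pascal rule. Unlike `qBinom`, it vanishes
for `k > n`, so the Pascal rule needs no case distinction at the boundary. -/
noncomputable def gaussBinom (x : ℝ) : ℕ → ℕ → ℝ
  | _, 0 => 1
  | 0, _ + 1 => 0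
  | n + 1, k + 1 => gaussBinom x n k + x ^ (k + 1) * gaussBinom x n (k + 1)

theorem gaussBinom_zero_right (x : ℝ) (n : ℕ) : gaussBinom x n 0 = 1 := by
  cases n <;> rfl

theorem gaussBinom_succ (x : ℝ) (n k : ℕ) : gaussBinom x (n + 1) (k + 1) =
    gaussBinom x n k + x ^ (k + 1) * gaussBinom x n (k + 1) := rfl

theorem gaussBinom_of_lt (x : ℝ) : ∀ n k : ℕ, n < k → gaussBinom x n k = 0
  | _, 0, h => by omega
  | 0, _ + 1, _ => rfl
  | n + 1, k + 1, h => by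
    rw [gaussBinom_succ, gaussBinom_of_lt x n k (by omega),
      gaussBinom_of_lt x n (k + 1) (by omega)]
    ring

theorem gaussBinom_self (x : ℝ) (n : ℕ) : gaussBinom x n n = 1 := by
  induction n with
  | zero => rfl
  | succ n ih => rw [gaussBinom_succ, ih, gaussBinom_of_lt x n (n + 1) (by omega)]; ring

theorem gaussBinom_mul (x : ℝ) : ∀ k m : ℕ, gaussBinom x (k + m) k *
    ((∏ i ∈ Finset.range k, (1 - x ^ (i + 1))) * (∏ i ∈ Finset.range m, (1 - x ^ (i + 1)))) =
      ∏ i ∈ Finset.range (k + m), (1 - x ^ (i + 1))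
  | 0, m => by simp [gaussBinom_zero_right]
  | k + 1, 0 => by simp [gaussBinom_self]
  | k + 1, m + 1 => by
    have h1 := gaussBinom_mul x k (m + 1)
    have h2 := gaussBinom_mul x (k + 1) m
    rw [show k + 1 + m = k + (m + 1) by ring] at h2
    rw [show k + 1 + (m + 1) = k + (m + 1) + 1 by ring, gaussBinom_succ,
      Finset.prod_range_succ _ (k + (m + 1))]
    rw [Finset.prod_range_succ _ m] at h1 ⊢
    rw [Finset.prod_range_succ _ k] at h2 ⊢
    linear_combination (1 - x ^ (k + 1)) * h1 + x ^ (k + 1) * (1 - x ^ (m + 1)) * h2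

theorem qBinom_eq_gaussBinom {x : ℝ} (hx : x ∈ Set.Ioo (0 : ℝ) 1) {n k : ℕ} (hk : k ≤ n) :
    qBinom x n k = gaussBinom x n k := by
  have hne : ∀ m : ℕ, (∏ i ∈ Finset.range m, (1 - x ^ (i + 1))) ≠ 0 := fun m =>
    Finset.prod_ne_zero_iff.2 fun i _ =>
      (sub_pos.2 (pow_lt_one₀ hx.1.le hx.2 (Nat.succ_ne_zero i))).ne'
  have h := gaussBinom_mul x k (n - k)
  rw [Nat.add_sub_cancel' hk] at h
  rw [qBinom, div_eq_iff (mul_ne_zero (hne _) (hne _)), h]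

/-- If `T` satisfies the recursion of the sequence `b*^k b^k`, the Gaussian binomial sum does not
depend on `n`. -/
theorem gauss_sum {A : Type*} [Ring A] [Algebra ℂ A] (p : ℝ) (B : A) (T : ℕ → A)
    (h0 : T 0 = 1)
    (hT : ∀ k, T (k + 1) = T k - ((p : ℂ) ^ (k + 1)) • (B * T k)) (n : ℕ) :
    ∑ k ∈ Finset.range (n + 1),
      ((gaussBinom p n k * p ^ (n - k) : ℝ) : ℂ) • (B ^ (n - k) * T k) = 1 := by
  induction n with
  | zero => simp [gaussBinom_zero_right, h0]
  | succ n ih =>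
    -- The part of the Pascal rule carrying `p ^ k`, with its (vanishing) term `k = n + 1` removed
    -- and its term `k = 0` supplied by the leading term of the sum.
    have key : ∑ k ∈ Finset.range (n + 1),
          ((p ^ (k + 1) * gaussBinom p n (k + 1) * p ^ (n - k) : ℝ) : ℂ) •
            (B ^ (n - k) * T (k + 1)) +
          ((p ^ (n + 1) : ℝ) : ℂ) • (B ^ (n + 1) * T 0) =
        ∑ k ∈ Finset.range (n + 1),
          ((p ^ k * gaussBinom p n k * p ^ (n + 1 - k) : ℝ) : ℂ) • (B ^ (n + 1 - k) * T k) := by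
      have h1 := Finset.sum_range_succ' (fun k =>
        ((p ^ k * gaussBinom p n k * p ^ (n + 1 - k) : ℝ) : ℂ) • (B ^ (n + 1 - k) * T k)) (n + 1)
      have h2 := Finset.sum_range_succ (fun k =>
        ((p ^ k * gaussBinom p n k * p ^ (n + 1 - k) : ℝ) : ℂ) • (B ^ (n + 1 - k) * T k)) (n + 1)
      rw [h1] at h2
      simpa only [gaussBinom_of_lt p n (n + 1) (by omega), Nat.add_sub_add_right, mul_zero,
        zero_mul, Complex.ofReal_zero, zero_smul, add_zero, pow_zero, one_mul,
        gaussBinom_zero_right, Nat.sub_zero] using h2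
    rw [Finset.sum_range_succ']
    simp only [gaussBinom_succ, gaussBinom_zero_right, Nat.add_sub_add_right, Nat.sub_zero,
      one_mul, add_mul, Complex.ofReal_add, add_smul, Finset.sum_add_distrib]
    rw [add_assoc, key, ← Finset.sum_add_distrib, ← ih]
    refine Finset.sum_congr rfl fun k hk => ?_
    have hk' : k ≤ n := Nat.lt_succ_iff.1 (Finset.mem_range.1 hk)
    rw [Nat.sub_add_comm hk', hT, mul_sub, mul_smul_comm, ← mul_assoc, ← pow_succ, smul_sub, smul_smul,
      sub_add_eq_add_sub, sub_eq_iff_eq_add]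
    congr 2
    push_cast
    ring

theorem star_pow_mul_comm {A : Type*} [Ring A] [Algebra ℂ A] (p : ℂ) {B c : A}
    (h : c * B = p • (B * c)) (k : ℕ) : c ^ k * B = p ^ k • (B * c ^ k) := by
  induction k with
  | zero => simp
  | succ k ih =>
    rw [pow_succ', mul_assoc, ih, mul_smul_comm, ← mul_assoc, h, smul_mul_assoc, smul_smul,
      mul_assoc, ← pow_succ]

theorem star_pow_mul_pow_succ {A : Type*} [Ring A] [Algebra ℂ A] (p : ℂ) {B c b : A}
    (h1 : c * b = 1 - p • B) (h2 : c * B = p • (B * c)) (k : ℕ) :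
    c ^ (k + 1) * b ^ (k + 1) = c ^ k * b ^ k - p ^ (k + 1) • (B * (c ^ k * b ^ k)) := by
  calc c ^ (k + 1) * b ^ (k + 1) = c ^ k * (c * b) * b ^ k := by
        rw [pow_succ, pow_succ' b]; simp only [mul_assoc]
    _ = _ := by
        rw [h1, mul_sub, mul_one, sub_mul, mul_smul_comm, star_pow_mul_comm p h2, smul_smul,
          smul_mul_assoc, mul_assoc, ← pow_succ']

theorem pow_collapse {A : Type*} [Ring A] {a d B : A} (h : a * d * B = B) (hd : Commute d B)
    (ha : Commute a B) (m : ℕ) : B ^ m * (a ^ m * d ^ m) = B ^ m := by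
  have h1 : ∀ m : ℕ, a ^ m * d ^ m * B = B := by
    intro m
    induction m with
    | zero => simp
    | succ m ih =>
      calc a ^ (m + 1) * d ^ (m + 1) * B = a ^ m * (a * (d * (d ^ m * B))) := by
            rw [pow_succ a, pow_succ' d]; simp only [mul_assoc]
        _ = a ^ m * (a * d * B * d ^ m) := by
            rw [(hd.pow_left m).eq]; simp only [mul_assoc]
        _ = B := by rw [h, ← (hd.pow_left m).eq, ← mul_assoc, ih]
  have hc : Commute (a ^ m * d ^ m) B := (ha.pow_left m).mul_left (hd.pow_left m)
  cases m with
  | zero => simp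
  | succ m => rw [← (hc.pow_right (m + 1)).eq, pow_succ' B, ← mul_assoc, h1]

/-- In the *-algebra `O(S³_{pq})` (formalized via its universal property: in
any unital complex *-algebra with elements `a`, `b` satisfying the defining relations), with
`B = 1 - b b*`, the identity
`Σ_{k=0}^{n} binom(n,k)_p p^{n-k} B^{n-k} a^{n-k} b^{*k} b^k a^{*(n-k)} = 1` holds; hence with
`(X_n)_k = b^k a^{*(n-k)}` and `(Y_n)_k = binom(n,k)_p p^{n-k} B^{n-k} a^{n-k} b^{*k}` one has
`Y_nᵀ X_n = 1` and the matrix `E_n = X_n Y_nᵀ` is an idempotent. -/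
theorem statement3 (p q : ℝ) (hp : p ∈ Set.Ioo (0 : ℝ) 1) (hq : q ∈ Set.Ioo (0 : ℝ) 1)
    (n : ℕ) (hn : 1 ≤ n)
    (A : Type*) [Ring A] [Algebra ℂ A] [StarRing A] [StarModule ℂ A]
    (a b : A)
    (rel1 : star a * a - (q : ℂ) • (a * star a) = ((1 - q : ℝ) : ℂ) • (1 : A))
    (rel2 : star b * b - (p : ℂ) • (b * star b) = ((1 - p : ℝ) : ℂ) • (1 : A))
    (rel3 : (1 - a * star a) * (1 - b * star b) = 0)
    (rel4 : a * b = b * a) (rel5 : star a * b = b * star a)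
    (B : A) (hB : B = 1 - b * star b)
    (X Y : Fin (n + 1) → A)
    (hX : ∀ k : Fin (n + 1), X k = b ^ (k : ℕ) * (star a) ^ (n - (k : ℕ)))
    (hY : ∀ k : Fin (n + 1), Y k = ((qBinom p n (k : ℕ) * p ^ (n - (k : ℕ)) : ℝ) : ℂ) •
      (B ^ (n - (k : ℕ)) * a ^ (n - (k : ℕ)) * (star b) ^ (k : ℕ)))
    (E : Matrix (Fin (n + 1)) (Fin (n + 1)) A)
    (hE : E = Matrix.of fun i j => X i * Y j) :
    (∑ k : Fin (n + 1), Y k * X k) = 1 ∧ E * E = E := by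
  have hab' : Commute (star b) (star a) := by
    have := congrArg star rel4
    simpa [Commute, SemiconjBy] using this
  have hba' : Commute (star b) a := by
    have := congrArg star rel5
    simpa [Commute, SemiconjBy] using this
  have hab : Commute a b := rel4
  have hab2 : Commute (star a) b := rel5
  have haB : Commute a B := by
    rw [hB]; exact (Commute.one_right a).sub_right (hab.mul_right hba'.symm)
  have hdB : Commute (star a) B := by
    rw [hB]; exact (Commute.one_right _).sub_right (hab2.mul_right hab'.symm)
  have hcollapse : a * star a * B = B := by
    rw [← hB, sub_mul, one_mul, sub_eq_zero] at rel3
    exact rel3.symm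
  have h1 : star b * b = 1 - (p : ℂ) • B := by
    rw [hB, sub_eq_iff_eq_add.1 rel2]
    push_cast
    module
  have h2 : star b * B = (p : ℂ) • (B * star b) := by
    have : star b * B = star b - star b * b * star b := by
      rw [hB, mul_sub, mul_one, mul_assoc]
    rw [this, h1, sub_mul, one_mul, smul_mul_assoc, sub_sub_cancel]
  have hsum : ∑ k : Fin (n + 1), Y k * X k = 1 := by
    rw [← gauss_sum p B (fun k => star b ^ k * b ^ k) (by simp)
      (star_pow_mul_pow_succ (p : ℂ) h1 h2) n, ← Fin.sum_univ_eq_sum_range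
        (fun k => ((gaussBinom p n k * p ^ (n - k) : ℝ) : ℂ) •
          (B ^ (n - k) * (star b ^ k * b ^ k)))]
    refine Finset.sum_congr rfl fun k _ => ?_
    rw [hX, hY, qBinom_eq_gaussBinom hp (Nat.lt_succ_iff.1 k.2), smul_mul_assoc]
    congr 1
    generalize n - (k : ℕ) = m
    generalize (k : ℕ) = k
    have hc : Commute (star b ^ k * b ^ k) (star a ^ m) :=
      (hab'.pow_pow k m).mul_left (hab2.symm.pow_pow k m)
    calc B ^ m * a ^ m * star b ^ k * (b ^ k * star a ^ m)
        = B ^ m * (a ^ m * (star b ^ k * b ^ k * star a ^ m)) := by simp only [mul_assoc]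
      _ = B ^ m * (a ^ m * star a ^ m) * (star b ^ k * b ^ k) := by
          rw [hc.eq]; simp only [mul_assoc]
      _ = _ := by rw [pow_collapse hcollapse hdB haB]
  refine ⟨hsum, ?_⟩
  ext i j
  simp only [hE, Matrix.mul_apply, Matrix.of_apply]
  calc ∑ k, X i * Y k * (X k * Y j) = X i * (∑ k, Y k * X k) * Y j := by
        simp only [Finset.mul_sum, Finset.sum_mul, mul_assoc]
    _ = X i * Y j := by rw [hsum, mul_one]
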